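/- The covering index is lower semicontinuous with respect to the Banach–Mazur distance: for every convex body K ⊆ ℝ^d (d ≥ 2) and every ε > 0 there exists η > 1 such that every convex body K' ⊆ ℝ^d with d_BM(K, K') < η satisfies coin(K') > coin(K) − ε. -/

import Mathlib

open Set Pointwise

section Defs

variable {V : Type*} [NormedAddCommGroup V] [NormedSpace ℝ V]

/-- A convex body: compact, convex, with nonempty interior. -/
def IsConvexBody (K : Set V) : Prop :=
  IsCompact K ∧ Convex ℝ K ∧ (interior K).Nonempty

/-- `K` can be covered by `m` homothets of ratio `lam`. -/
def CoversWith (K : Set V) (lam : ℝ) (m : ℕ) : Prop :=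
  ∃ t : Fin m → V, K ⊆ ⋃ i, (fun x => lam • x + t i) '' K

/-- The `m`-covering number `γ_m(K)`. -/
noncomputable def gammaC (m : ℕ) (K : Set V) : ℝ :=
  sInf {lam : ℝ | 0 < lam ∧ CoversWith K lam m}

/-- The covering index `coin(K)`. -/
noncomputable def coin (K : Set V) : ℝ :=
  sInf {r : ℝ | ∃ m : ℕ, 0 < m ∧ gammaC m K ≤ 1 / 2 ∧ r = (m : ℝ) / (1 - gammaC m K)}

/-- The weak covering index `wcoin(K)`. -/
noncomputable def wcoin (K : Set V) : ℝ :=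
  sInf {r : ℝ | ∃ m : ℕ, 0 < m ∧ gammaC m K < 1 ∧ r = (m : ℝ) / (1 - gammaC m K)}

/-- `N_λ(K)`: the least number of translates of `λ • K` needed to cover `K`. -/
noncomputable def covN (lam : ℝ) (K : Set V) : ℕ :=
  sInf {n : ℕ | CoversWith K lam n}

/-- A convex body is tightly covered if for every `0 < λ < 1` it contains `N_λ(K)`
points no two of which lie in a common homothet `λ • K + t`. -/
def TightlyCovered (K : Set V) : Prop :=
  ∀ lam : ℝ, 0 < lam → lam < 1 →
    ∃ p : Fin (covN lam K) → V, (∀ i, p i ∈ K) ∧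
      ∀ i j, i ≠ j → ∀ t : V,
        ¬(p i ∈ (fun x => lam • x + t) '' K ∧ p j ∈ (fun x => lam • x + t) '' K)

/-- The covering parameter `C(K)` of Swanepoel. -/
noncomputable def covParam (K : Set V) : ℝ :=
  sInf {r : ℝ | ∃ k : ℕ, ∃ lam : Fin k → ℝ, ∃ t : Fin k → V,
    (∀ i, 0 < lam i ∧ lam i < 1) ∧
    (K ⊆ ⋃ i, (fun x => lam i • x + t i) '' K) ∧
    r = ∑ i, 1 / (1 - lam i)}

/-- The (multiplicative) Banach–Mazur distance. -/
noncomputable def distBM {d : ℕ} (K L : Set (Fin d → ℝ)) : ℝ :=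
  sInf {δ : ℝ | 1 ≤ δ ∧ ∃ T : (Fin d → ℝ) ≃ₗ[ℝ] (Fin d → ℝ), ∃ a ∈ K, ∃ b ∈ L,
    (fun x => x - b) '' L ⊆ T '' ((fun x => x - a) '' K) ∧
    T '' ((fun x => x - a) '' K) ⊆ δ • ((fun x => x - b) '' L)}

end Defs

/-!
If `L ⊆ K ⊆ δL` up to affine maps, then every covering of `L` by `m` copies of `λL` gives a
covering of `K` by `m` copies of `δλK`, so `γ_m(K) ≤ δ γ_m(L)`. Let `c < coin K`. A term
`m / (1 - γ_m(L))` of `coin L` is at least `m`, so it can be smaller than `c` only for the finitely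
many `m < c`. For each of these, `γ_m(L) ≥ γ_m(K) / δ`, and as `δ → 1` the right-hand side tends to
`γ_m(K)`: either it ends up above `1 / 2` and the term is absent, or the term ends up above `c`.
-/

open Filter Topology Bornology

theorem image_sub_right_mem_nhds_zero {V : Type*} [SeminormedAddCommGroup V] {K : Set V} {a : V}
    (h : K ∈ 𝓝 a) : (fun x => x - a) '' K ∈ 𝓝 0 := by
  simpa using (Homeomorph.subRight a).isOpenMap.image_mem_nhds h

theorem isBounded_image_sub_right {V : Type*} [SeminormedAddCommGroup V] {K : Set V}
    (hK : IsBounded K) (a : V) : IsBounded ((fun x => x - a) '' K) := by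
  simpa [← sub_singleton] using hK.sub (isBounded_singleton (x := a))

theorem eventually_subset_smul_of_isBounded {V : Type*} [SeminormedAddCommGroup V]
    [NormedSpace ℝ V] {A B : Set V} (hA : IsBounded A) (hB : B ∈ 𝓝 0) :
    ∀ᶠ s : ℝ in atTop, A ⊆ s • B :=
  (NormedSpace.isVonNBounded_of_isBounded ℝ hA hB).eventually.filter_mono
    IsOrderBornology.atTop_le_cobounded

section CoveringNumber

variable {V W : Type*} [NormedAddCommGroup V] [NormedSpace ℝ V]
  [NormedAddCommGroup W] [NormedSpace ℝ W] {K L : Set V} {lam : ℝ} {m : ℕ}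

theorem coversWith_iff :
    CoversWith K lam m ↔ ∃ t : Fin m → V, ∀ x ∈ K, ∃ i, ∃ y ∈ K, lam • y + t i = x := by
  simp only [CoversWith, subset_def, mem_iUnion, mem_image]

theorem coversWith_one (K : Set V) (hm : 0 < m) : CoversWith K 1 m :=
  coversWith_iff.2 ⟨0, fun x hx => ⟨⟨0, hm⟩, x, hx, by simp⟩⟩

theorem CoversWith.pos (h : CoversWith K lam m) (hK : K.Nonempty) : 0 < m := by
  obtain ⟨t, ht⟩ := coversWith_iff.1 h
  obtain ⟨x, hx⟩ := hK
  obtain ⟨i, -⟩ := ht x hx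
  exact i.pos

theorem CoversWith.image (h : CoversWith K lam m) (f : V →ᵃ[ℝ] W) :
    CoversWith (f '' K) lam m := by
  obtain ⟨t, ht⟩ := coversWith_iff.1 h
  have hf : ∀ x, f x = f.linear x + f 0 := congrFun f.decomp
  refine coversWith_iff.2 ⟨fun i => f.linear (t i) + (1 - lam) • f 0, ?_⟩
  rintro _ ⟨x, hx, rfl⟩
  obtain ⟨i, y, hy, rfl⟩ := ht x hx
  refine ⟨i, f y, mem_image_of_mem f hy, ?_⟩
  rw [hf y, hf (lam • y + t i), map_add, map_smul]
  module

theorem CoversWith.of_subset_of_subset_smul {δ : ℝ} (h : CoversWith L lam m) (hLK : L ⊆ K)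
    (hKL : K ⊆ δ • L) : CoversWith K (δ * lam) m := by
  obtain ⟨t, ht⟩ := coversWith_iff.1 h
  refine coversWith_iff.2 ⟨δ • t, fun x hx => ?_⟩
  obtain ⟨y, hy, rfl⟩ := hKL hx
  obtain ⟨i, z, hz, rfl⟩ := ht y hy
  exact ⟨i, z, hLK hz, by simp [smul_smul]⟩

theorem exists_coversWith (hK : TotallyBounded K) (hint : (interior K).Nonempty)
    (hlam : lam ≠ 0) : ∃ m, CoversWith K lam m := by
  obtain ⟨c, hc⟩ := hint
  have hU : lam • (fun x => x - c) '' K ∈ 𝓝 (0 : V) :=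
    (set_smul_mem_nhds_zero_iff hlam).2
      (image_sub_right_mem_nhds_zero (mem_interior_iff_mem_nhds.1 hc))
  obtain ⟨s, hs, hKs⟩ := totallyBounded_iff_subset_finite_iUnion_nhds_zero.1 hK _ hU
  lift s to Finset V using hs
  refine ⟨s.card, coversWith_iff.2 ⟨fun i => s.equivFin.symm i - lam • c, fun x hx => ?_⟩⟩
  obtain ⟨y, hy, _, ⟨_, ⟨z, hz, rfl⟩, rfl⟩, rfl⟩ := mem_iUnion₂.1 (hKs hx)
  refine ⟨s.equivFin ⟨y, hy⟩, z, hz, ?_⟩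
  simp only [Equiv.symm_apply_apply, vadd_eq_add]
  module

theorem gammaC_nonneg (m : ℕ) (K : Set V) : 0 ≤ gammaC m K :=
  Real.sInf_nonneg fun _ h => h.1.le

theorem CoversWith.gammaC_le (h : CoversWith K lam m) (hlam : 0 < lam) : gammaC m K ≤ lam :=
  csInf_le ⟨0, fun _ h => h.1.le⟩ ⟨hlam, h⟩

end CoveringNumber

section BanachMazur

variable {V W : Type*} [NormedAddCommGroup V] [NormedSpace ℝ V]
  [NormedAddCommGroup W] [NormedSpace ℝ W]

/-- `δ` is a factor for which `L - b ⊆ T (K - a) ⊆ δ • (L - b)` for some linear equivalence `T`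
and points `a ∈ K`, `b ∈ L`: `distBM K L` is the infimum of the factors `δ ≥ 1`. -/
def IsBanachMazurFactor (K : Set V) (L : Set W) (δ : ℝ) : Prop :=
  ∃ T : V ≃ₗ[ℝ] W, ∃ a ∈ K, ∃ b ∈ L,
    (fun x => x - b) '' L ⊆ T '' ((fun x => x - a) '' K) ∧
    T '' ((fun x => x - a) '' K) ⊆ δ • ((fun x => x - b) '' L)

variable {K : Set V} {L : Set W} {δ lam : ℝ} {m : ℕ}

theorem IsBanachMazurFactor.coversWith (h : IsBanachMazurFactor K L δ)
    (hL : CoversWith L lam m) : CoversWith K (δ * lam) m := by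
  obtain ⟨T, a, -, b, -, hLK, hKL⟩ := h
  have hLb : CoversWith ((fun x => x - b) '' L) lam m :=
    hL.image (AffineMap.id ℝ W - AffineMap.const ℝ W b)
  have hTK : CoversWith (T '' ((fun x => x - a) '' K)) (δ * lam) m :=
    hLb.of_subset_of_subset_smul hLK hKL
  simpa [image_image] using
    hTK.image (T.symm.toLinearMap.toAffineMap + AffineMap.const ℝ W a)

theorem IsBanachMazurFactor.gammaC_div_le (h : IsBanachMazurFactor K L δ) (hδ : 0 < δ)
    (hm : 0 < m) : gammaC m K / δ ≤ gammaC m L := by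
  refine le_csInf ⟨1, one_pos, coversWith_one L hm⟩ fun lam ⟨hlam, hL⟩ => ?_
  rw [div_le_iff₀' hδ]
  exact (h.coversWith hL).gammaC_le (by positivity)

/-- Rules out the junk value `sInf ∅ = 0` of `distBM`. -/
theorem exists_isBanachMazurFactor {K L : Set V} (hK : IsBounded K)
    (hKint : (interior K).Nonempty) (hL : IsBounded L) (hLint : (interior L).Nonempty) :
    ∃ δ, 1 ≤ δ ∧ IsBanachMazurFactor K L δ := by
  obtain ⟨a, ha⟩ := hKint
  obtain ⟨b, hb⟩ := hLint
  have hKa : (fun x => x - a) '' K ∈ 𝓝 0 :=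
    image_sub_right_mem_nhds_zero (mem_interior_iff_mem_nhds.1 ha)
  have hLb : (fun x => x - b) '' L ∈ 𝓝 0 :=
    image_sub_right_mem_nhds_zero (mem_interior_iff_mem_nhds.1 hb)
  obtain ⟨s, hLK, hs⟩ :=
    ((eventually_subset_smul_of_isBounded (isBounded_image_sub_right hL b) hKa).and
      (eventually_gt_atTop 0)).exists
  obtain ⟨δ, hKL, hδ⟩ :=
    ((eventually_subset_smul_of_isBounded ((isBounded_image_sub_right hK a).smul₀ s) hLb).and
      (eventually_ge_atTop 1)).exists
  exact ⟨δ, hδ, LinearEquiv.smulOfNeZero ℝ V s hs.ne', a, interior_subset ha, b, interior_subset hb,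
    hLK, hKL⟩

end BanachMazur

section CoveringIndex

variable {V W : Type*} [NormedAddCommGroup V] [NormedSpace ℝ V]
  [NormedAddCommGroup W] [NormedSpace ℝ W] {K : Set V} {c : ℝ} {m : ℕ}

theorem coin_le (hm : 0 < m) (hγ : gammaC m K ≤ 1 / 2) : coin K ≤ m / (1 - gammaC m K) := by
  refine csInf_le ⟨0, ?_⟩ ⟨m, hm, hγ, rfl⟩
  rintro _ ⟨n, -, hn, rfl⟩
  exact div_nonneg n.cast_nonneg (by linarith)

/-- The existence of a covering with `lam = 1 / 2` keeps `coin K` from being `sInf ∅ = 0`. -/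
theorem le_coin (hK : TotallyBounded K) (hint : (interior K).Nonempty)
    (h : ∀ m : ℕ, 0 < m → gammaC m K ≤ 1 / 2 → c ≤ m / (1 - gammaC m K)) : c ≤ coin K := by
  obtain ⟨m, hm⟩ := exists_coversWith hK hint (lam := 1 / 2) (by norm_num)
  refine le_csInf ⟨_, m, hm.pos (hint.mono interior_subset), hm.gammaC_le (by norm_num), rfl⟩ ?_
  rintro _ ⟨n, hn, hγ, rfl⟩
  exact h n hn hγ

theorem eventually_lt_div_one_sub_of_lt_coin (hc : c < coin K) (hm : 0 < m) :
    ∀ᶠ g in 𝓝 (gammaC m K), g ≤ 1 / 2 → c < m / (1 - g) := by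
  rcases le_or_gt (gammaC m K) (1 / 2) with hγ | hγ
  · have hcont : ContinuousAt (fun g : ℝ => (m : ℝ) / (1 - g)) (gammaC m K) :=
      continuousAt_const.div (continuousAt_const.sub continuousAt_id) (by linarith)
    exact (hcont.eventually (lt_mem_nhds (hc.trans_le (coin_le hm hγ)))).mono fun _ h _ => h
  · exact (lt_mem_nhds hγ).mono fun g hg hg' => absurd hg' hg.not_ge

theorem eventually_forall_lt_div_one_sub_of_lt_coin (hc : c < coin K) :
    ∀ᶠ δ in 𝓝 (1 : ℝ), ∀ m : ℕ, 0 < m → m < c →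
      gammaC m K / δ ≤ 1 / 2 → c < m / (1 - gammaC m K / δ) := by
  have hfin : {m : ℕ | 0 < m ∧ (m : ℝ) < c}.Finite :=
    (finite_Iio ⌈c⌉₊).subset fun m hm => Nat.lt_ceil.2 hm.2
  have hev : ∀ᶠ δ in 𝓝 (1 : ℝ), ∀ m ∈ {m : ℕ | 0 < m ∧ (m : ℝ) < c},
      gammaC m K / δ ≤ 1 / 2 → c < m / (1 - gammaC m K / δ) := by
    refine (eventually_all_finite hfin).2 fun m hm => ?_
    have hlim : Tendsto (fun δ : ℝ => gammaC m K / δ) (𝓝 1) (𝓝 (gammaC m K)) :=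
      (continuousAt_const.div continuousAt_id one_ne_zero).tendsto.trans_eq (by simp)
    exact hlim.eventually (eventually_lt_div_one_sub_of_lt_coin hc hm.1)
  exact hev.mono fun δ h m hm hmc => h m ⟨hm, hmc⟩

theorem eventually_le_coin_of_isBanachMazurFactor (hc : c < coin K) :
    ∀ᶠ δ in 𝓝 (1 : ℝ), ∀ L : Set W, TotallyBounded L → (interior L).Nonempty →
      IsBanachMazurFactor K L δ → c ≤ coin L := by
  filter_upwards [eventually_forall_lt_div_one_sub_of_lt_coin hc, lt_mem_nhds one_pos]
    with δ hδ hδ0 L hL hLint hKL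
  refine le_coin hL hLint fun m hm hγ => ?_
  have hγ0 : 0 ≤ gammaC m L := gammaC_nonneg m L
  have hKγ : gammaC m K / δ ≤ gammaC m L := hKL.gammaC_div_le hδ0 hm
  rcases le_or_gt c m with hcm | hmc
  · exact hcm.trans (le_div_self m.cast_nonneg (by linarith) (by linarith))
  · calc
      c ≤ m / (1 - gammaC m K / δ) := (hδ m hm hmc (hKγ.trans hγ)).le
      _ ≤ m / (1 - gammaC m L) := by gcongr; linarith

end CoveringIndex

theorem coin_lowerSemicontinuous_general (d : ℕ) (K : Set (Fin d → ℝ)) (hK : IsBounded K)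
    (hKint : (interior K).Nonempty) (ε : ℝ) (hε : 0 < ε) :
    ∃ η : ℝ, 1 < η ∧ ∀ K' : Set (Fin d → ℝ), IsBounded K' → (interior K').Nonempty →
      distBM K K' < η → coin K - ε < coin K' := by
  obtain ⟨η, hη, hcoin⟩ := exists_Ico_subset_of_mem_nhds
    (eventually_le_coin_of_isBanachMazurFactor (W := Fin d → ℝ)
      (sub_lt_self (coin K) (half_pos hε))) ⟨2, one_lt_two⟩
  refine ⟨η, hη, fun K' hK' hK'int hdist => ?_⟩
  obtain ⟨δ, ⟨hδ, hfactor⟩, hδη⟩ :=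
    exists_lt_of_csInf_lt (exists_isBanachMazurFactor hK hKint hK' hK'int) hdist
  have hle : coin K - ε / 2 ≤ coin K' :=
    hcoin ⟨hδ, hδη⟩ K' (hK'.isCompact_closure.totallyBounded.subset subset_closure) hK'int hfactor
  linarith

/-- the covering index is lower semicontinuous with respect to
the Banach–Mazur distance. -/
theorem coin_lowerSemicontinuous (d : ℕ) (hd : 2 ≤ d) (K : Set (Fin d → ℝ))
    (hK : IsConvexBody K) (ε : ℝ) (hε : 0 < ε) :
    ∃ η : ℝ, 1 < η ∧ ∀ K' : Set (Fin d → ℝ), IsConvexBody K' →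
      distBM K K' < η → coin K - ε < coin K' := by
  obtain ⟨η, hη, h⟩ := coin_lowerSemicontinuous_general d K hK.1.isBounded hK.2.2 ε hε
  exact ⟨η, hη, fun K' hK' => h K' hK'.1.isBounded hK'.2.2⟩
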